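/- Let f : [0,∞) → ℝ be a four times continuously differentiable convex function with f(1) = 1 such that g(x) = x²·f''(x) belongs to 𝒯⁺, and suppose there exist c > 0 and s > 1 with f(x) ≥ c·x^s for all x ≥ 0. Then for every finite set 𝒳 and all pmfs p, q on 𝒳 with p ≪ q, ∑_{x : q(x)>0} q(x) f(p(x)/q(x)) ≥ exp( (s−1) · D_KL(p‖q) ), where D_KL(p‖q) = ∑_{x : p(x)>0} p(x) log(p(x)/q(x)). -/

import Mathlib

open scoped BigOperators

/-- A probability mass function on a finite type: nonnegative and summing to 1. -/
def IsPMF {X : Type*} [Fintype X] (p : X → ℝ) : Prop :=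
  (∀ x, 0 ≤ p x) ∧ ∑ x, p x = 1

/-- Absolute continuity `p ≪ q`: `q x = 0` implies `p x = 0`. -/
def AbsCont {X : Type*} (p q : X → ℝ) : Prop :=
  ∀ x, q x = 0 → p x = 0

/-- `Σ_f(p‖q) = ∑_{x : q(x) > 0} q(x) f(p(x)/q(x))` (the f-divergence when `f 1 = 0`). -/
noncomputable def fDiv {X : Type*} [Fintype X] (f : ℝ → ℝ) (p q : X → ℝ) : ℝ :=
  ∑ x, if 0 < q x then q x * f (p x / q x) else 0

/-- The Kullback--Leibler divergence `D_KL(p‖q) = ∑_{x : p(x)>0} p(x) log(p(x)/q(x))`. -/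
noncomputable def klDiv {X : Type*} [Fintype X] (p q : X → ℝ) : ℝ :=
  ∑ x, if 0 < p x then p x * Real.log (p x / q x) else 0

/-!
If `g` satisfies the `𝒯⁺` inequality, then the sum `Σ_f` is submultiplicative under products of
mass functions. This follows by applying twice the same consequence of Jensen's inequality: if
`u'' ≤ u(1) f''` and `f(1) = 1`, then `u(1) f - u` is convex and vanishes at `1`, so
`Σ_u ≤ u(1) Σ_f`. For `u(y) = g(xy)` the hypothesis is the `𝒯⁺` inequality, and the conclusion
`Σ_y q(y) g(x p(y)/q(y)) ≤ g(x) Σ_f(p‖q)` is the hypothesis for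
`u(x) = Σ_y q(y) f(x p(y)/q(y))`, whose own `Σ_u` is the `Σ_f` of a product.

Since `Σ_{xˢ}` is exactly multiplicative, `f ≥ c xˢ` evaluated on `n`-fold products gives
`c Σ_{xˢ}(p‖q)ⁿ ≤ Σ_f(p‖q)ⁿ` for every `n`, which removes the constant `c`. Finally
`exp((s-1) D_KL) ≤ Σ_{xˢ}` is Jensen's inequality for the exponential.
-/

open Set

section FDiv

variable {X Y : Type*} {f u v : ℝ → ℝ} {p q : X → ℝ} {r t : Y → ℝ}

lemma AbsCont.mul_div_cancel (hpq : AbsCont p q) (x : X) : q x * (p x / q x) = p x :=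
  mul_div_cancel_of_imp' (hpq x)

/-- The product `p ⊗ r` of two mass functions. -/
def pmfProd (p : X → ℝ) (r : Y → ℝ) : X × Y → ℝ := fun z ↦ p z.1 * r z.2

/-- The `n`-fold product `p ⊗ ⋯ ⊗ p` of a mass function. -/
def pmfPow (p : X → ℝ) (n : ℕ) : (Fin n → X) → ℝ := fun x ↦ ∏ i, p (x i)

lemma pmfProd_nonneg (hp : ∀ x, 0 ≤ p x) (hr : ∀ y, 0 ≤ r y) (z : X × Y) : 0 ≤ pmfProd p r z :=
  mul_nonneg (hp z.1) (hr z.2)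

lemma pmfPow_nonneg (hp : ∀ x, 0 ≤ p x) {n : ℕ} (x : Fin n → X) : 0 ≤ pmfPow p n x :=
  Finset.prod_nonneg fun _ _ ↦ hp _

lemma AbsCont.pmfPow (hpq : AbsCont p q) (n : ℕ) : AbsCont (pmfPow p n) (pmfPow q n) := by
  intro x hx
  obtain ⟨i, hi, hqi⟩ := Finset.prod_eq_zero_iff.1 hx
  exact Finset.prod_eq_zero hi (hpq _ hqi)

variable [Fintype X] [Fintype Y]

lemma IsPMF.pmfPow (hp : IsPMF p) (n : ℕ) : IsPMF (pmfPow p n) :=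
  ⟨pmfPow_nonneg hp.1, by simp only [_root_.pmfPow, ← Fintype.sum_pow, hp.2, one_pow]⟩

lemma fDiv_eq_sum (f : ℝ → ℝ) (p : X → ℝ) (hq : ∀ x, 0 ≤ q x) :
    fDiv f p q = ∑ x, q x * f (p x / q x) := by
  refine Finset.sum_congr rfl fun x _ ↦ ?_
  rcases (hq x).eq_or_lt with h | h
  · simp [← h]
  · rw [if_pos h]

lemma klDiv_eq_sum (q : X → ℝ) (hp : ∀ x, 0 ≤ p x) :
    klDiv p q = ∑ x, p x * Real.log (p x / q x) := by
  refine Finset.sum_congr rfl fun x _ ↦ ?_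
  rcases (hp x).eq_or_lt with h | h
  · simp [← h]
  · rw [if_pos h]

lemma fDiv_const_mul (c : ℝ) (f : ℝ → ℝ) (p q : X → ℝ) :
    fDiv (fun x ↦ c * f x) p q = c * fDiv f p q := by
  simp only [fDiv, Finset.mul_sum, mul_ite, mul_zero, mul_left_comm]

lemma fDiv_sub (f u : ℝ → ℝ) (p q : X → ℝ) :
    fDiv (fun x ↦ f x - u x) p q = fDiv f p q - fDiv u p q := by
  rw [fDiv, fDiv, fDiv, ← Finset.sum_sub_distrib]
  refine Finset.sum_congr rfl fun x _ ↦ ?_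
  split_ifs
  · ring
  · simp

lemma fDiv_mono (hp : ∀ x, 0 ≤ p x) (huv : ∀ x, 0 ≤ x → u x ≤ v x) :
    fDiv u p q ≤ fDiv v p q := by
  refine Finset.sum_le_sum fun x _ ↦ ?_
  split_ifs with h
  · exact mul_le_mul_of_nonneg_left (huv _ (div_nonneg (hp x) h.le)) h.le
  · rfl

lemma fDiv_nonneg (hp : ∀ x, 0 ≤ p x) (hf : ∀ x, 0 ≤ x → 0 ≤ f x) : 0 ≤ fDiv f p q := by
  simpa [fDiv] using fDiv_mono (q := q) hp hf

lemma map_one_le_fDiv (hf : ConvexOn ℝ (Ici 0) f) (hp : IsPMF p) (hq : IsPMF q)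
    (hpq : AbsCont p q) : f 1 ≤ fDiv f p q := by
  have jensen := hf.map_sum_le (t := Finset.univ) (w := q) (p := fun x ↦ p x / q x)
    (fun x _ ↦ hq.1 x) hq.2 (fun x _ ↦ div_nonneg (hp.1 x) (hq.1 x))
  simpa only [smul_eq_mul, hpq.mul_div_cancel, hp.2, ← fDiv_eq_sum f p hq.1] using jensen

lemma exp_mul_klDiv_le_fDiv_rpow (s : ℝ) (hp : IsPMF p) (hq : ∀ x, 0 ≤ q x)
    (hpq : AbsCont p q) : Real.exp ((s - 1) * klDiv p q) ≤ fDiv (· ^ s) p q := by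
  have jensen := convexOn_exp.map_sum_le (t := Finset.univ) (w := p)
    (p := fun x ↦ (s - 1) * Real.log (p x / q x)) (fun x _ ↦ hp.1 x) hp.2 (fun _ _ ↦ mem_univ _)
  simp only [smul_eq_mul, mul_left_comm _ (s - 1), ← Finset.mul_sum, ← klDiv_eq_sum q hp.1]
    at jensen
  rw [fDiv_eq_sum _ _ hq]
  refine jensen.trans (Finset.sum_le_sum fun x _ ↦ ?_)
  rcases (hp.1 x).eq_or_lt with h | h
  · simpa [← h] using mul_nonneg (hq x) (Real.rpow_nonneg le_rfl s)
  · have hqx : 0 < q x := (hq x).lt_of_ne' fun h₀ ↦ h.ne' (hpq x h₀)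
    have hratio : 0 < p x / q x := div_pos h hqx
    apply le_of_eq
    calc p x * Real.exp ((s - 1) * Real.log (p x / q x))
        = p x * ((p x / q x) ^ s / (p x / q x)) := by
          rw [mul_comm (s - 1), ← Real.rpow_def_of_pos hratio, Real.rpow_sub_one hratio.ne']
      _ = q x * (p x / q x) ^ s := by field_simp

lemma fDiv_pmfProd (f : ℝ → ℝ) (p : X → ℝ) (r : Y → ℝ) (hq : ∀ x, 0 ≤ q x) (ht : ∀ y, 0 ≤ t y) :
    fDiv f (pmfProd p r) (pmfProd q t) = fDiv (fun x ↦ fDiv (fun y ↦ f (y * x)) r t) p q := by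
  rw [fDiv_eq_sum _ _ (pmfProd_nonneg hq ht), fDiv_eq_sum _ _ hq, Fintype.sum_prod_type]
  simp only [fDiv_eq_sum _ _ ht, pmfProd, Finset.mul_sum, mul_assoc, mul_div_mul_comm,
    mul_comm (p _ / q _)]

lemma fDiv_pmfPow_zero (f : ℝ → ℝ) (p q : X → ℝ) : fDiv f (pmfPow p 0) (pmfPow q 0) = f 1 := by
  simp [fDiv, pmfPow]

lemma fDiv_pmfPow_succ (f : ℝ → ℝ) (p q : X → ℝ) (n : ℕ) :
    fDiv f (pmfPow p (n + 1)) (pmfPow q (n + 1)) =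
      fDiv f (pmfProd p (pmfPow p n)) (pmfProd q (pmfPow q n)) := by
  have hcons (w : X → ℝ) (z : X × (Fin n → X)) :
      pmfProd w (pmfPow w n) z = pmfPow w (n + 1) (Fin.consEquiv (fun _ ↦ X) z) := by
    simp [pmfPow, pmfProd, Fin.prod_univ_succ]
  refine (Fintype.sum_equiv (Fin.consEquiv fun _ ↦ X) _ _ fun z ↦ ?_).symm
  rw [hcons, hcons]

lemma fDiv_rpow_pmfPow (s : ℝ) (hp : ∀ x, 0 ≤ p x) (hq : ∀ x, 0 ≤ q x) (n : ℕ) :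
    fDiv (· ^ s) (pmfPow p n) (pmfPow q n) = fDiv (· ^ s) p q ^ n := by
  rw [fDiv_eq_sum _ _ hq, fDiv_eq_sum _ _ (pmfPow_nonneg hq), Fintype.sum_pow]
  refine Finset.sum_congr rfl fun x _ ↦ ?_
  rw [pmfPow, pmfPow, ← Finset.prod_div_distrib,
    ← Real.finsetProd_rpow _ _ fun i _ ↦ div_nonneg (hp _) (hq _), ← Finset.prod_mul_distrib]

end FDiv

/-- `u` is continuous on `[0, ∞)` and has first and second derivatives `u'` and `u''` on `(0, ∞)`.
Nothing is asked of the derivatives at `0`, so that `u x = x ^ s` is covered for every `s > 0`. -/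
structure HasSecondDerivOnPos (u u' u'' : ℝ → ℝ) : Prop where
  continuousOn : ContinuousOn u (Ici 0)
  hasDerivAt : ∀ x, 0 < x → HasDerivAt u (u' x) x
  hasDerivAt_deriv : ∀ x, 0 < x → HasDerivAt u' (u'' x) x

namespace HasSecondDerivOnPos

variable {u u' u'' v v' v'' : ℝ → ℝ}

lemma of_hasDerivWithinAt (hu' : ∀ x ∈ Ici (0 : ℝ), HasDerivWithinAt u (u' x) (Ici 0) x)
    (hu'' : ∀ x ∈ Ici (0 : ℝ), HasDerivWithinAt u' (u'' x) (Ici 0) x) :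
    HasSecondDerivOnPos u u' u'' where
  continuousOn x hx := (hu' x hx).continuousWithinAt
  hasDerivAt x hx := (hu' x hx.le).hasDerivAt (Ici_mem_nhds hx)
  hasDerivAt_deriv x hx := (hu'' x hx.le).hasDerivAt (Ici_mem_nhds hx)

lemma const_mul (c : ℝ) (hu : HasSecondDerivOnPos u u' u'') :
    HasSecondDerivOnPos (fun x ↦ c * u x) (fun x ↦ c * u' x) (fun x ↦ c * u'' x) where
  continuousOn := hu.continuousOn.const_mul c
  hasDerivAt x hx := (hu.hasDerivAt x hx).const_mul c
  hasDerivAt_deriv x hx := (hu.hasDerivAt_deriv x hx).const_mul c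

lemma sub (hu : HasSecondDerivOnPos u u' u'') (hv : HasSecondDerivOnPos v v' v'') :
    HasSecondDerivOnPos (fun x ↦ u x - v x) (fun x ↦ u' x - v' x) (fun x ↦ u'' x - v'' x) where
  continuousOn := hu.continuousOn.sub hv.continuousOn
  hasDerivAt x hx := (hu.hasDerivAt x hx).sub (hv.hasDerivAt x hx)
  hasDerivAt_deriv x hx := (hu.hasDerivAt_deriv x hx).sub (hv.hasDerivAt_deriv x hx)

lemma sum {ι : Type*} (S : Finset ι) {w w' w'' : ι → ℝ → ℝ}
    (hw : ∀ i ∈ S, HasSecondDerivOnPos (w i) (w' i) (w'' i)) :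
    HasSecondDerivOnPos (fun x ↦ ∑ i ∈ S, w i x) (fun x ↦ ∑ i ∈ S, w' i x)
      (fun x ↦ ∑ i ∈ S, w'' i x) where
  continuousOn := continuousOn_finsetSum S fun i hi ↦ (hw i hi).continuousOn
  hasDerivAt x hx := HasDerivAt.fun_sum fun i hi ↦ (hw i hi).hasDerivAt x hx
  hasDerivAt_deriv x hx := HasDerivAt.fun_sum fun i hi ↦ (hw i hi).hasDerivAt_deriv x hx

lemma comp_mul_left {c : ℝ} (hc : 0 ≤ c) (hu : HasSecondDerivOnPos u u' u'') :
    HasSecondDerivOnPos (fun x ↦ u (c * x)) (fun x ↦ c * u' (c * x))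
      (fun x ↦ c ^ 2 * u'' (c * x)) := by
  rcases hc.eq_or_lt with rfl | hc
  · constructor <;> simp [continuousOn_const, hasDerivAt_const]
  have hlin (x : ℝ) : HasDerivAt (fun y ↦ c * y) c x := by
    simpa using (hasDerivAt_id x).const_mul c
  refine ⟨hu.continuousOn.comp (by fun_prop) fun x hx ↦ mul_nonneg hc.le hx,
    fun x hx ↦ ?_, fun x hx ↦ ?_⟩
  · rw [mul_comm]
    exact (hu.hasDerivAt _ (mul_pos hc hx)).comp x (hlin x)
  · rw [sq, mul_assoc, mul_comm c (u'' _)]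
    exact ((hu.hasDerivAt_deriv _ (mul_pos hc hx)).comp x (hlin x)).const_mul c

lemma convexOn (hu : HasSecondDerivOnPos u u' u'') (hnonneg : ∀ x, 0 < x → 0 ≤ u'' x) :
    ConvexOn ℝ (Ici 0) u := by
  refine convexOn_of_hasDerivWithinAt2_nonneg (convex_Ici 0) hu.continuousOn
    (f' := u') (f'' := u'') ?_ ?_ ?_ <;> rw [interior_Ici]
  · exact fun x hx ↦ (hu.hasDerivAt x hx).hasDerivWithinAt
  · exact fun x hx ↦ (hu.hasDerivAt_deriv x hx).hasDerivWithinAt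
  · exact hnonneg

variable {X : Type*} [Fintype X] {p q : X → ℝ}

lemma fDiv_comp_mul (hu : HasSecondDerivOnPos u u' u'') (hp : ∀ x, 0 ≤ p x)
    (hq : ∀ x, 0 ≤ q x) :
    HasSecondDerivOnPos (fun x ↦ fDiv (fun y ↦ u (y * x)) p q)
      (fun x ↦ fDiv (fun y ↦ y * u' (y * x)) p q)
      (fun x ↦ fDiv (fun y ↦ y ^ 2 * u'' (y * x)) p q) := by
  simp only [fDiv_eq_sum _ _ hq]
  exact sum _ fun y _ ↦ (hu.comp_mul_left (div_nonneg (hp y) (hq y))).const_mul (q y)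

lemma fDiv_le_mul_fDiv (hu : HasSecondDerivOnPos u u' u'') (hv : HasSecondDerivOnPos v v' v'')
    (hv1 : v 1 = 1) (huv : ∀ x, 0 < x → u'' x ≤ u 1 * v'' x)
    (hp : IsPMF p) (hq : IsPMF q) (hpq : AbsCont p q) :
    fDiv u p q ≤ u 1 * fDiv v p q := by
  have hconv : ConvexOn ℝ (Ici 0) fun x ↦ u 1 * v x - u x :=
    ((hv.const_mul (u 1)).sub hu).convexOn fun x hx ↦ sub_nonneg.2 (huv x hx)
  have jensen := map_one_le_fDiv hconv hp hq hpq
  rwa [fDiv_sub, fDiv_const_mul, hv1, mul_one, sub_self, sub_nonneg] at jensen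

end HasSecondDerivOnPos

section Submultiplicative

variable {f f' f'' g g' g'' : ℝ → ℝ} (hf : HasSecondDerivOnPos f f' f'') (hf1 : f 1 = 1)
  (hg : HasSecondDerivOnPos g g' g'') (hgf : ∀ x, 0 ≤ x → g x = x ^ 2 * f'' x)
  (hT : ∀ x, 0 < x → ∀ α, 0 < α → x ^ 2 * g'' x ≤ g α * g (x / α))
  {X Y : Type*} [Fintype X] [Fintype Y] {p q : X → ℝ} {r t : Y → ℝ}

include hf hf1 hg hgf hT

lemma fDiv_comp_mul_le (hp : IsPMF p) (hq : IsPMF q) (hpq : AbsCont p q) {x : ℝ} (hx : 0 < x) :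
    fDiv (fun y ↦ g (x * y)) p q ≤ g x * fDiv f p q := by
  have hderiv (y : ℝ) (hy : 0 < y) : x ^ 2 * g'' (x * y) ≤ g (x * 1) * f'' y := by
    refine le_of_mul_le_mul_left ?_ (pow_pos hy 2)
    calc y ^ 2 * (x ^ 2 * g'' (x * y)) = (x * y) ^ 2 * g'' (x * y) := by ring
      _ ≤ g x * g y := by simpa [hx.ne'] using hT (x * y) (mul_pos hx hy) x hx
      _ = y ^ 2 * (g (x * 1) * f'' y) := by rw [mul_one, hgf y hy.le]; ring
  simpa using (hg.comp_mul_left hx.le).fDiv_le_mul_fDiv hf hf1 hderiv hp hq hpq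

lemma fDiv_pmfProd_le (hp : IsPMF p) (hq : IsPMF q) (hpq : AbsCont p q)
    (hr : IsPMF r) (ht : IsPMF t) (hrt : AbsCont r t) :
    fDiv f (pmfProd p r) (pmfProd q t) ≤ fDiv f p q * fDiv f r t := by
  have hderiv (x : ℝ) (hx : 0 < x) :
      fDiv (fun y ↦ y ^ 2 * f'' (y * x)) r t ≤ fDiv (fun y ↦ f (y * 1)) r t * f'' x := by
    refine le_of_mul_le_mul_left ?_ (pow_pos hx 2)
    calc x ^ 2 * fDiv (fun y ↦ y ^ 2 * f'' (y * x)) r t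
        = fDiv (fun y ↦ x ^ 2 * (y ^ 2 * f'' (y * x))) r t := (fDiv_const_mul ..).symm
      _ ≤ fDiv (fun y ↦ g (x * y)) r t := fDiv_mono hr.1 fun y hy ↦ by
          rw [hgf _ (mul_nonneg hx.le hy), mul_comm y x, mul_pow, mul_assoc]
      _ ≤ g x * fDiv f r t := fDiv_comp_mul_le hf hf1 hg hgf hT hr ht hrt hx
      _ = x ^ 2 * (fDiv (fun y ↦ f (y * 1)) r t * f'' x) := by
          simp only [mul_one, hgf x hx.le]; ring
  rw [fDiv_pmfProd f p r hq.1 ht.1, mul_comm]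
  simpa using (hf.fDiv_comp_mul hr.1 ht.1).fDiv_le_mul_fDiv hf hf1 hderiv hp hq hpq

lemma fDiv_pmfPow_le (hp : IsPMF p) (hq : IsPMF q) (hpq : AbsCont p q)
    (hnonneg : 0 ≤ fDiv f p q) (n : ℕ) :
    fDiv f (pmfPow p n) (pmfPow q n) ≤ fDiv f p q ^ n := by
  induction n with
  | zero => rw [fDiv_pmfPow_zero, hf1, pow_zero]
  | succ n ih =>
    calc fDiv f (pmfPow p (n + 1)) (pmfPow q (n + 1))
        = fDiv f (pmfProd p (pmfPow p n)) (pmfProd q (pmfPow q n)) := fDiv_pmfPow_succ f p q n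
      _ ≤ fDiv f p q * fDiv f (pmfPow p n) (pmfPow q n) :=
          fDiv_pmfProd_le hf hf1 hg hgf hT hp hq hpq (hp.pmfPow n) (hq.pmfPow n) (hpq.pmfPow n)
      _ ≤ fDiv f p q * fDiv f p q ^ n := mul_le_mul_of_nonneg_left ih hnonneg
      _ = fDiv f p q ^ (n + 1) := (pow_succ' ..).symm

end Submultiplicative

lemma le_of_forall_mul_pow_le_pow {K : Type*} [Field K] [LinearOrder K] [IsStrictOrderedRing K]
    [Archimedean K] {a b c : K} (hc : 0 < c) (hb : 0 ≤ b) (h : ∀ n : ℕ, c * a ^ n ≤ b ^ n) :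
    a ≤ b := by
  by_contra! hba
  have ha : 0 < a := hb.trans_lt hba
  obtain ⟨n, hn⟩ := exists_pow_lt_of_lt_one hc ((div_lt_one ha).2 hba)
  rw [div_pow, div_lt_iff₀ (pow_pos ha n)] at hn
  exact (h n).not_gt hn

theorem fDiv_ge_exp_klDiv_general {f f' f'' g g' g'' : ℝ → ℝ} {c s : ℝ}
    (hf : HasSecondDerivOnPos f f' f'') (hf1 : f 1 = 1)
    (hg : HasSecondDerivOnPos g g' g'') (hgf : ∀ x, 0 ≤ x → g x = x ^ 2 * f'' x)
    (hT : ∀ x, 0 < x → ∀ α, 0 < α → x ^ 2 * g'' x ≤ g α * g (x / α))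
    (hc : 0 < c) (hlow : ∀ x, 0 ≤ x → c * x ^ s ≤ f x)
    {X : Type*} [Fintype X] {p q : X → ℝ} (hp : IsPMF p) (hq : IsPMF q) (hpq : AbsCont p q) :
    Real.exp ((s - 1) * klDiv p q) ≤ fDiv f p q := by
  have hnonneg : 0 ≤ fDiv f p q := fDiv_nonneg hp.1 fun x hx ↦
    (mul_nonneg hc.le (Real.rpow_nonneg hx s)).trans (hlow x hx)
  refine (exp_mul_klDiv_le_fDiv_rpow s hp hq.1 hpq).trans
    (le_of_forall_mul_pow_le_pow hc hnonneg fun n ↦ ?_)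
  calc c * fDiv (· ^ s) p q ^ n
      = c * fDiv (· ^ s) (pmfPow p n) (pmfPow q n) := by rw [fDiv_rpow_pmfPow s hp.1 hq.1]
    _ = fDiv (fun x ↦ c * x ^ s) (pmfPow p n) (pmfPow q n) := (fDiv_const_mul ..).symm
    _ ≤ fDiv f (pmfPow p n) (pmfPow q n) := fDiv_mono (hp.pmfPow n).1 hlow
    _ ≤ fDiv f p q ^ n := fDiv_pmfPow_le hf hf1 hg hgf hT hp hq hpq hnonneg n

/-- Comparison with KL divergence for the `log(1+x)` transform: if `f` is a four times
continuously differentiable convex function with `f 1 = 1`, `g x = x² f''(x) ∈ 𝒯⁺`,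
and `f x ≥ c xˢ` for some `c > 0`, `s > 1`, then for all pmfs `p ≪ q`,
`Σ_f(p‖q) ≥ exp((s−1) D_KL(p‖q))`. -/
theorem fDiv_ge_exp_klDiv
    (f f' f'' f3 f4 g g' g'' : ℝ → ℝ) (c s : ℝ)
    (hf' : ∀ x ∈ Set.Ici (0 : ℝ), HasDerivWithinAt f (f' x) (Set.Ici 0) x)
    (hf'' : ∀ x ∈ Set.Ici (0 : ℝ), HasDerivWithinAt f' (f'' x) (Set.Ici 0) x)
    (hf3 : ∀ x ∈ Set.Ici (0 : ℝ), HasDerivWithinAt f'' (f3 x) (Set.Ici 0) x)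
    (hf4 : ∀ x ∈ Set.Ici (0 : ℝ), HasDerivWithinAt f3 (f4 x) (Set.Ici 0) x)
    (hf4cont : ContinuousOn f4 (Set.Ici 0))
    (hconv : ConvexOn ℝ (Set.Ici 0) f) (hf1 : f 1 = 1)
    (hg : ∀ x : ℝ, g x = x ^ 2 * f'' x)
    (hg' : ∀ x ∈ Set.Ici (0 : ℝ), HasDerivWithinAt g (g' x) (Set.Ici 0) x)
    (hg'' : ∀ x ∈ Set.Ici (0 : ℝ), HasDerivWithinAt g' (g'' x) (Set.Ici 0) x)
    (hg_nonneg : ∀ x ∈ Set.Ici (0 : ℝ), 0 ≤ g x)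
    (hTplus : ∀ x ∈ Set.Ici (0 : ℝ), ∀ α : ℝ, 0 < α →
      x ^ 2 * g'' x - g α * g (x / α) ≤ 0)
    (hc : 0 < c) (hs : 1 < s)
    (hlow : ∀ x : ℝ, 0 ≤ x → c * x ^ s ≤ f x) :
    ∀ (𝒳 : Type) [Fintype 𝒳] (p q : 𝒳 → ℝ),
      IsPMF p → IsPMF q → AbsCont p q →
      Real.exp ((s - 1) * klDiv p q) ≤ fDiv f p q := by
  intro _ _ _ _ hp hq hpq
  exact fDiv_ge_exp_klDiv_general (.of_hasDerivWithinAt hf' hf'') hf1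
    (.of_hasDerivWithinAt hg' hg'') (fun x _ ↦ hg x)
    (fun x hx α hα ↦ sub_nonpos.1 (hTplus x hx.le α hα)) hc hlow hp hq hpq
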